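/- Let X and Y be real normed linear spaces with X strictly convex, reflexive and complete. Let T : X → Y be a compact bounded linear operator that is left symmetric in the operator space with ‖T‖ = 1, suppose Tx = f(x)·w for all x, where w ∈ Y is a unit vector and f is a norm-one continuous linear functional on X, and suppose x₁ ∈ M_T. Then x₁ is a left symmetric point of X if and only if x₁ is a smooth point of X. -/

import Mathlib

open Filter Topology Set

/-- Birkhoff–James orthogonality: `x ⊥_B y` iff `‖x + t • y‖ ≥ ‖x‖` for all real `t`.
For bounded linear operators this is orthogonality in the operator norm. -/
def BJOrth {E : Type*} [NormedAddCommGroup E] [NormedSpace ℝ E] (x y : E) : Prop :=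
  ∀ t : ℝ, ‖x‖ ≤ ‖x + t • y‖

/-- A point `x` is left symmetric if `x ⊥_B y` implies `y ⊥_B x` for all `y`. -/
def LeftSymPt {E : Type*} [NormedAddCommGroup E] [NormedSpace ℝ E] (x : E) : Prop :=
  ∀ y : E, BJOrth x y → BJOrth y x

/-- A point `x` is right symmetric if `y ⊥_B x` implies `x ⊥_B y` for all `y`. -/
def RightSymPt {E : Type*} [NormedAddCommGroup E] [NormedSpace ℝ E] (x : E) : Prop :=
  ∀ y : E, BJOrth y x → BJOrth x y

/-- A unit vector `x` is a smooth point if it has a unique norming functional. -/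
def SmoothPt {E : Type*} [NormedAddCommGroup E] [NormedSpace ℝ E] (x : E) : Prop :=
  ∃! f : E →L[ℝ] ℝ, ‖f‖ = 1 ∧ f x = 1

/-- A normed space is reflexive if the canonical embedding into the double dual is surjective. -/
def ReflexiveSp (E : Type*) [NormedAddCommGroup E] [NormedSpace ℝ E] : Prop :=
  Function.Surjective (NormedSpace.inclusionInDoubleDual ℝ E)

/-- The Kadets–Klee property: weak convergence of a sequence together with convergence of norms
implies norm convergence. -/
def KadetsKlee (E : Type*) [NormedAddCommGroup E] [NormedSpace ℝ E] : Prop :=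
  ∀ (x : ℕ → E) (x₀ : E),
    (∀ f : E →L[ℝ] ℝ, Tendsto (fun n => f (x n)) atTop (nhds (f x₀))) →
    Tendsto (fun n => ‖x n‖) atTop (nhds ‖x₀‖) →
    Tendsto (fun n => ‖x n - x₀‖) atTop (nhds 0)

/-- The norm attaining set `M_T` of a bounded linear operator. -/
def normAttain {X Y : Type*} [NormedAddCommGroup X] [NormedSpace ℝ X]
    [NormedAddCommGroup Y] [NormedSpace ℝ Y] (T : X →L[ℝ] Y) : Set X :=
  {x | ‖x‖ = 1 ∧ ‖T x‖ = ‖T‖}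

/-- `inPlus u v` means `v ∈ u⁺`, i.e. `‖u + t • v‖ ≥ ‖u‖` for all `t ≥ 0`. -/
def inPlus {E : Type*} [NormedAddCommGroup E] [NormedSpace ℝ E] (u v : E) : Prop :=
  ∀ t : ℝ, 0 ≤ t → ‖u‖ ≤ ‖u + t • v‖

/-- `inMinus u v` means `v ∈ u⁻`, i.e. `‖u + t • v‖ ≥ ‖u‖` for all `t ≤ 0`. -/
def inMinus {E : Type*} [NormedAddCommGroup E] [NormedSpace ℝ E] (u v : E) : Prop :=
  ∀ t : ℝ, t ≤ 0 → ‖u‖ ≤ ‖u + t • v‖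

/-- If `x ⊥_B y` and `x` is a unit vector, some norming functional of `x` vanishes at `y`. -/
theorem BJOrth.exists_norming_functional_apply_eq_zero {E : Type*} [NormedAddCommGroup E]
    [NormedSpace ℝ E] {x y : E} (hx : ‖x‖ = 1) (h : BJOrth x y) :
    ∃ g : E →L[ℝ] ℝ, (‖g‖ = 1 ∧ g x = 1) ∧ g y = 0 := by
  let S : Submodule ℝ E := Submodule.span ℝ {y}
  have hmk_le : ∀ z : E, ‖S.mkQL z‖ ≤ ‖z‖ := fun z => QuotientAddGroup.norm_mk_le_norm
  have hmk : ‖S.mkQL x‖ = 1 := by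
    refine le_antisymm (hx ▸ hmk_le x) ?_
    refine QuotientAddGroup.le_norm_iff.2 fun m hm => ?_
    obtain ⟨t, ht⟩ := Submodule.mem_span_singleton.1 ((Submodule.Quotient.eq S).1 hm)
    have hmx : m = x + t • y := by rw [ht]; abel
    rw [hmx, ← hx]
    exact h t
  obtain ⟨φ, hφ, hφx⟩ := exists_dual_vector'' ℝ (S.mkQL x)
  have hgx : (φ.comp S.mkQL) x = 1 := hφx.trans (by simp only [hmk, RCLike.ofReal_real_eq_id, id])
  refine ⟨φ.comp S.mkQL, ⟨le_antisymm ?_ ?_, hgx⟩, ?_⟩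
  · refine ContinuousLinearMap.opNorm_le_bound _ zero_le_one fun z => ?_
    calc ‖φ (S.mkQL z)‖ ≤ ‖φ‖ * ‖S.mkQL z‖ := φ.le_opNorm _
      _ ≤ 1 * ‖z‖ := by gcongr; exact hmk_le z
  · simpa [hgx, hx] using (φ.comp S.mkQL).le_opNorm x
  · have hy : S.mkQL y = 0 :=
      (Submodule.Quotient.mk_eq_zero S).2 (Submodule.mem_span_singleton_self y)
    simp [hy]

/-- A norming functional of a vector `x` that vanishes at `y` witnesses `x ⊥_B y`. -/
theorem BJOrth.of_norming_functional {E : Type*} [NormedAddCommGroup E] [NormedSpace ℝ E]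
    {x y : E} {g : E →L[ℝ] ℝ} (hg : ‖g‖ ≤ 1) (hgx : g x = ‖x‖) (hgy : g y = 0) :
    BJOrth x y := fun t => by
  calc ‖x‖ = g (x + t • y) := by simp [hgx, hgy]
    _ ≤ ‖g (x + t • y)‖ := le_abs_self _
    _ ≤ ‖x + t • y‖ := g.le_of_opNorm_le_of_le hg le_rfl |>.trans_eq (one_mul _)

/-- In a strictly convex space a line has at most one point orthogonal to its direction. -/
theorem BJOrth.eq_zero_of_add_smul {E : Type*} [NormedAddCommGroup E] [NormedSpace ℝ E]
    [StrictConvexSpace ℝ E] {x y : E} {s : ℝ} (hx : x ≠ 0) (h : BJOrth y x)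
    (hs : BJOrth (y + s • x) x) : s = 0 := by
  by_contra hs0
  have hle : ‖y + s • x‖ ≤ ‖y‖ := by simpa [add_assoc] using hs (-s)
  have hne : y ≠ y + s • x := by simp [hs0, hx]
  have hlt := norm_combo_lt_of_ne (a := 1 / 2) (b := 1 / 2) le_rfl hle hne
    (by norm_num) (by norm_num) (by norm_num)
  have hmid : (1 / 2 : ℝ) • y + (1 / 2 : ℝ) • (y + s • x) = y + (s / 2) • x := by module
  rw [hmid] at hlt
  exact hlt.not_ge (h _)

/-- If `x ↦ f x • w` is left symmetric and attains its norm at `x`, then every vector of `ker f`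
is orthogonal to `x`. -/
theorem LeftSymPt.bjOrth_of_apply_eq_zero {X Y : Type*} [NormedAddCommGroup X] [NormedSpace ℝ X]
    [NormedAddCommGroup Y] [NormedSpace ℝ Y] {f : X →L[ℝ] ℝ} {w : Y} (hw : ‖w‖ = 1)
    (hsym : LeftSymPt (f.smulRight w)) {x : X} (hx : x ∈ normAttain (f.smulRight w))
    (hfx : f x ≠ 0) {y : X} (hy : f y = 0) : BJOrth y x := by
  obtain ⟨k, hk, hky⟩ := exists_dual_vector'' ℝ y
  set c : ℝ := k x / f x with hc
  have hhx : (k - c • f) x = 0 := by simp [hc, hfx]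
  have horth : BJOrth (f.smulRight w) ((k - c • f).smulRight w) := fun t => by
    have happ : (f.smulRight w + t • (k - c • f).smulRight w) x = f.smulRight w x := by
      simp only [add_apply, smul_apply, ContinuousLinearMap.smulRight_apply, hhx]
      simp
    have := (f.smulRight w + t • (k - c • f).smulRight w).le_opNorm x
    rwa [happ, hx.2, hx.1, mul_one] at this
  have hle : ‖k - c • f‖ ≤ 1 := by
    have := hsym _ horth c
    have hsum : (k - c • f).smulRight w + c • f.smulRight w = k.smulRight w := by
      ext z
      simp only [add_apply, sub_apply, smul_apply, ContinuousLinearMap.smulRight_apply]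
      module
    rw [hsum, ContinuousLinearMap.norm_smulRight_apply, ContinuousLinearMap.norm_smulRight_apply,
      hw, mul_one, mul_one] at this
    exact this.trans hk
  exact .of_norming_functional hle (by simpa [hy] using hky) hhx

/-- If `f` is a norming functional of `x` and `ker f ⊥_B x` in a strictly convex space, then left
symmetry and smoothness of `x` are equivalent. -/
theorem leftSymPt_iff_smoothPt_of_ker_bjOrth {X : Type*} [NormedAddCommGroup X]
    [NormedSpace ℝ X] [StrictConvexSpace ℝ X] {x : X} (hx : ‖x‖ = 1) {f : X →L[ℝ] ℝ}
    (hf : ‖f‖ = 1) (hfx : f x = 1) (hker : ∀ y, f y = 0 → BJOrth y x) :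
    LeftSymPt x ↔ SmoothPt x := by
  have hx0 : x ≠ 0 := by rintro rfl; simp at hx
  refine ⟨fun hsym => ⟨f, ⟨hf, hfx⟩, ?_⟩, ?_⟩
  · rintro g ⟨hg, hgx⟩
    ext z
    have hyx : BJOrth (z - g z • x) x :=
      hsym _ (.of_norming_functional hg.le (hgx.trans hx.symm) (by simp [hgx]))
    have hs := hyx.eq_zero_of_add_smul (s := g z - f z) hx0 (hker _ (by simp [hfx]))
    exact sub_eq_zero.1 hs
  · rintro ⟨f₀, -, huniq⟩ y hxy
    obtain ⟨g, hg, hgy⟩ := hxy.exists_norming_functional_apply_eq_zero hx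
    have hgf : g = f := (huniq g hg).trans (huniq f ⟨hf, hfx⟩).symm
    exact hker y (hgf ▸ hgy)

theorem rank_one_left_symmetric_operator_left_symmetric_iff_smooth
    {X Y : Type*} [NormedAddCommGroup X] [NormedSpace ℝ X]
    [StrictConvexSpace ℝ X] [CompleteSpace X]
    [NormedAddCommGroup Y] [NormedSpace ℝ Y]
    (hrefl : ReflexiveSp X)
    (T : X →L[ℝ] Y) (hTcpt : IsCompactOperator T)
    (hTsym : LeftSymPt T) (hTnorm : ‖T‖ = 1)
    (w : Y) (hw : ‖w‖ = 1) (f : X →L[ℝ] ℝ) (hf : ‖f‖ = 1)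
    (hTrank : ∀ x : X, T x = f x • w)
    (x₁ : X) (hx₁ : x₁ ∈ normAttain T) :
    LeftSymPt x₁ ↔ SmoothPt x₁ := by
  obtain rfl : T = f.smulRight w := by ext x; simp [hTrank]
  have hfx : |f x₁| = 1 := by
    simpa [norm_smul, hw, hTnorm, -ContinuousLinearMap.norm_smulRight_apply] using hx₁.2
  have hker : ∀ y, f y = 0 → BJOrth y x₁ := fun y hy =>
    hTsym.bjOrth_of_apply_eq_zero hw hx₁ (by rintro h; simp [h] at hfx) hy
  rcases eq_or_eq_neg_of_abs_eq hfx with h | h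
  · exact leftSymPt_iff_smoothPt_of_ker_bjOrth hx₁.1 hf h hker
  · exact leftSymPt_iff_smoothPt_of_ker_bjOrth (f := -f) hx₁.1 (by rwa [norm_neg]) (by simp [h])
      fun y hy => hker y (by simpa using hy)
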